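/- arXiv:1206.5504 — 3 statements merged into one kernel-verified Lean document; each statement's English description precedes it below -/
import Mathlib

section
/- Let V be a finite-dimensional complex vector space with a nondegenerate bilinear form B that is either symmetric or alternating, and let C, C' be endomorphisms of V skew-symmetric with respect to B. Let V_N, V_I denote the Fitting components of C and V'_N, V'_I those of C'. Then there exists an isometry P of (V, B) with C' = P ∘ C ∘ P⁻¹ if and only if there exist linear isomorphisms P_N : V_N → V'_N and P_I : V_I → V'_I such that B(P_N x, P_N y) = B(x, y) for all x, y ∈ V_N, B(P_I x, P_I y) = B(x, y) for all x, y ∈ V_I, P_N(C x) = C'(P_N x) for all x ∈ V_N, and P_I(C x) = C'(P_I x) for all x ∈ V_I. (This is Proposition 1.5.1: the isometry class of a skew-symmetric map is determined by the isometry classes of its nilpotent and invertible Fitting components.) -/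
/-- The nilpotent Fitting component of an endomorphism: `⋃ₖ ker (C^k)`. -/
def fittingNil {V : Type*} [AddCommGroup V] [Module ℂ V] (C : V →ₗ[ℂ] V) :
    Submodule ℂ V :=
  ⨆ k : ℕ, LinearMap.ker (C ^ k)

/-- The invertible Fitting component of an endomorphism: `⋂ₖ range (C^k)`. -/
def fittingInv {V : Type*} [AddCommGroup V] [Module ℂ V] (C : V →ₗ[ℂ] V) :
    Submodule ℂ V :=
  ⨅ k : ℕ, LinearMap.range (C ^ k)

theorem aux_mem_nil {V : Type*} [AddCommGroup V] [Module ℂ V] (C : V →ₗ[ℂ] V) (x : V) :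
    x ∈ fittingNil C ↔ ∃ k : ℕ, (C ^ k) x = 0 := by
  unfold fittingNil
  rw [Submodule.mem_iSup_of_directed]
  · simp [LinearMap.mem_ker]
  · apply Monotone.directed_le
    intro a b hab x hx
    rw [LinearMap.mem_ker] at hx ⊢
    obtain ⟨c, rfl⟩ := Nat.exists_eq_add_of_le' hab
    rw [pow_add, Module.End.mul_apply, hx, map_zero]

theorem aux_mem_inv {V : Type*} [AddCommGroup V] [Module ℂ V] (C : V →ₗ[ℂ] V) (x : V) :
    x ∈ fittingInv C ↔ ∀ k : ℕ, ∃ y, (C ^ k) y = x := by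
  simp [fittingInv, Submodule.mem_iInf, LinearMap.mem_range]

theorem aux_comm {V : Type*} [AddCommGroup V] [Module ℂ V] (C : V →ₗ[ℂ] V) (k : ℕ) (x : V) :
    (C ^ k) (C x) = C ((C ^ k) x) := by
  rw [← Module.End.mul_apply, ← Module.End.mul_apply, pow_mul_comm']

theorem aux_nil_stable {V : Type*} [AddCommGroup V] [Module ℂ V] (C : V →ₗ[ℂ] V) (x : V)
    (h : x ∈ fittingNil C) : C x ∈ fittingNil C := by
  rw [aux_mem_nil] at h ⊢
  obtain ⟨k, hk⟩ := h
  exact ⟨k, by rw [aux_comm, hk, map_zero]⟩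

theorem aux_inv_stable {V : Type*} [AddCommGroup V] [Module ℂ V] (C : V →ₗ[ℂ] V) (x : V)
    (h : x ∈ fittingInv C) : C x ∈ fittingInv C := by
  rw [aux_mem_inv] at h ⊢
  intro k
  obtain ⟨y, hy⟩ := h k
  exact ⟨C y, by rw [aux_comm, hy]⟩

theorem aux_skew_pow {V : Type*} [AddCommGroup V] [Module ℂ V] (B : LinearMap.BilinForm ℂ V)
    (C : V →ₗ[ℂ] V) (hC : ∀ x y : V, B (C x) y = - B x (C y)) (k : ℕ) :
    ∀ x y : V, B ((C ^ k) x) y = (-1) ^ k * B x ((C ^ k) y) := by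
  induction k with
  | zero => simp
  | succ k ih =>
    intro x y
    rw [pow_succ, Module.End.mul_apply, Module.End.mul_apply, ih, hC, aux_comm, pow_succ]
    ring

theorem aux_orth {V : Type*} [AddCommGroup V] [Module ℂ V] (B : LinearMap.BilinForm ℂ V)
    (C : V →ₗ[ℂ] V) (hC : ∀ x y : V, B (C x) y = - B x (C y)) (x y : V)
    (hx : x ∈ fittingNil C) (hy : y ∈ fittingInv C) : B x y = 0 ∧ B y x = 0 := by
  rw [aux_mem_nil] at hx
  rw [aux_mem_inv] at hy
  obtain ⟨k, hk⟩ := hx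
  obtain ⟨z, rfl⟩ := hy k
  constructor
  · have h := aux_skew_pow B C hC k x z
    rw [hk, map_zero, LinearMap.zero_apply] at h
    simpa using h.symm
  · rw [aux_skew_pow B C hC, hk, map_zero, mul_zero]

theorem aux_conj_pow {V : Type*} [AddCommGroup V] [Module ℂ V] (C C' : V →ₗ[ℂ] V)
    (P : V ≃ₗ[ℂ] V) (h : ∀ x : V, P (C x) = C' (P x)) (k : ℕ) :
    ∀ x, P ((C ^ k) x) = (C' ^ k) (P x) := by
  induction k with
  | zero => simp
  | succ k ih =>
    intro x
    rw [pow_succ, pow_succ, Module.End.mul_apply, Module.End.mul_apply, ih, h]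

theorem aux_map_nil {V : Type*} [AddCommGroup V] [Module ℂ V] (C C' : V →ₗ[ℂ] V)
    (P : V ≃ₗ[ℂ] V) (h : ∀ x : V, P (C x) = C' (P x)) :
    (fittingNil C).map (P : V →ₗ[ℂ] V) = fittingNil C' := by
  ext y
  obtain ⟨x, rfl⟩ := P.surjective y
  rw [Submodule.mem_map]
  constructor
  · rintro ⟨z, hz, hzx⟩
    obtain rfl : z = x := P.injective hzx
    rw [aux_mem_nil] at hz ⊢
    obtain ⟨k, hk⟩ := hz
    exact ⟨k, by rw [← aux_conj_pow C C' P h, hk, map_zero]⟩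
  · intro hx
    refine ⟨x, ?_, rfl⟩
    rw [aux_mem_nil] at hx ⊢
    obtain ⟨k, hk⟩ := hx
    exact ⟨k, by rwa [← aux_conj_pow C C' P h, LinearEquiv.map_eq_zero_iff] at hk⟩

theorem aux_map_inv {V : Type*} [AddCommGroup V] [Module ℂ V] (C C' : V →ₗ[ℂ] V)
    (P : V ≃ₗ[ℂ] V) (h : ∀ x : V, P (C x) = C' (P x)) :
    (fittingInv C).map (P : V →ₗ[ℂ] V) = fittingInv C' := by
  ext y
  obtain ⟨x, rfl⟩ := P.surjective y
  rw [Submodule.mem_map]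
  constructor
  · rintro ⟨z, hz, hzx⟩
    obtain rfl : z = x := P.injective hzx
    rw [aux_mem_inv] at hz ⊢
    intro k
    obtain ⟨w, hw⟩ := hz k
    exact ⟨P w, by rw [← aux_conj_pow C C' P h, hw]⟩
  · intro hx
    refine ⟨x, ?_, rfl⟩
    rw [aux_mem_inv] at hx ⊢
    intro k
    obtain ⟨w, hw⟩ := hx k
    obtain ⟨u, rfl⟩ := P.surjective w
    rw [← aux_conj_pow C C' P h] at hw
    exact ⟨u, P.injective hw⟩

/-- Two skew-symmetric maps are conjugate by an isometry if and only if
their nilpotent Fitting components and their invertible Fitting components are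
conjugate by isometries. -/
theorem stmt8 {V : Type*} [AddCommGroup V] [Module ℂ V] [FiniteDimensional ℂ V]
    (B : LinearMap.BilinForm ℂ V) (hB : B.Nondegenerate)
    (hBsa : (∀ x y : V, B x y = B y x) ∨ (∀ x y : V, B x y = - B y x))
    (C C' : V →ₗ[ℂ] V)
    (hC : ∀ x y : V, B (C x) y = - B x (C y))
    (hC' : ∀ x y : V, B (C' x) y = - B x (C' y)) :
    (∃ P : V ≃ₗ[ℂ] V, (∀ x y : V, B (P x) (P y) = B x y) ∧
        ∀ x : V, P (C x) = C' (P x)) ↔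
    (∃ (PN : ↥(fittingNil C) ≃ₗ[ℂ] ↥(fittingNil C'))
       (PI : ↥(fittingInv C) ≃ₗ[ℂ] ↥(fittingInv C')),
      (∀ x y : ↥(fittingNil C), B (↑(PN x)) (↑(PN y)) = B (↑x) (↑y)) ∧
      (∀ x y : ↥(fittingInv C), B (↑(PI x)) (↑(PI y)) = B (↑x) (↑y)) ∧
      (∀ (x : ↥(fittingNil C)) (h : C ↑x ∈ fittingNil C),
        (↑(PN ⟨C ↑x, h⟩) : V) = C' ↑(PN x)) ∧
      (∀ (x : ↥(fittingInv C)) (h : C ↑x ∈ fittingInv C),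
        (↑(PI ⟨C ↑x, h⟩) : V) = C' ↑(PI x))) := by
  constructor
  · rintro ⟨P, hP, hPC⟩
    exact ⟨P.ofSubmodules _ _ (aux_map_nil C C' P hPC),
      P.ofSubmodules _ _ (aux_map_inv C C' P hPC),
      fun x y => hP x y, fun x y => hP x y, fun x _ => hPC x, fun x _ => hPC x⟩
  · rintro ⟨PN, PI, hN, hI, hNC, hIC⟩
    have hc : IsCompl (fittingNil C) (fittingInv C) :=
      LinearMap.isCompl_iSup_ker_pow_iInf_range_pow C
    have hc' : IsCompl (fittingNil C') (fittingInv C') :=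
      LinearMap.isCompl_iSup_ker_pow_iInf_range_pow C'
    let P : V ≃ₗ[ℂ] V := (Submodule.prodEquivOfIsCompl _ _ hc).symm ≪≫ₗ
      (PN.prodCongr PI) ≪≫ₗ Submodule.prodEquivOfIsCompl _ _ hc'
    have key : ∀ (a : fittingNil C) (b : fittingInv C),
        P ((a : V) + (b : V)) = (PN a : V) + (PI b : V) := by
      intro a b
      have h1 : (a : V) + (b : V) = Submodule.prodEquivOfIsCompl _ _ hc (a, b) := by simp
      simp only [P, LinearEquiv.trans_apply]
      rw [h1, LinearEquiv.symm_apply_apply]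
      simp
    have dec : ∀ x : V, ∃ (a : fittingNil C) (b : fittingInv C), x = (a : V) + (b : V) := by
      intro x
      obtain ⟨⟨a, b⟩, h⟩ := (Submodule.prodEquivOfIsCompl _ _ hc).surjective x
      exact ⟨a, b, by rw [← h]; simp⟩
    refine ⟨P, ?_, ?_⟩
    · intro x y
      obtain ⟨a, b, rfl⟩ := dec x
      obtain ⟨c, d, rfl⟩ := dec y
      rw [key, key]
      simp only [map_add, LinearMap.add_apply]
      rw [hN, hI, (aux_orth B C hC a d a.2 d.2).1, (aux_orth B C hC c b c.2 b.2).2,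
        (aux_orth B C' hC' _ _ (PN a).2 (PI d).2).1, (aux_orth B C' hC' _ _ (PN c).2 (PI b).2).2]
    · intro x
      obtain ⟨a, b, rfl⟩ := dec x
      have h := key ⟨C a, aux_nil_stable C a a.2⟩ ⟨C b, aux_inv_stable C b b.2⟩
      rw [hNC, hIC] at h
      rw [key, map_add C, map_add C']
      exact h
end

section
/- Let V be a finite-dimensional complex vector space with a nondegenerate bilinear form B that is either symmetric or alternating, and let C be an endomorphism of V skew-symmetric with respect to B. Let V_N = ⋃ₖ ker(C^k) and V_I = ⋂ₖ range(C^k) be the Fitting components of C. Then V_I = {v ∈ V : B(v, w) = 0 for all w ∈ V_N}, i.e. V_I is the B-orthogonal of V_N, and the restrictions of B to V_N × V_N and to V_I × V_I are nondegenerate. -/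
theorem stmt9_aux {V : Type*} [AddCommGroup V] [Module ℂ V]
    (B : LinearMap.BilinForm ℂ V) (hB : B.Nondegenerate) (hr : B.IsRefl)
    (p q : Submodule ℂ V) (hpq : IsCompl p q) (ho : ∀ x ∈ p, ∀ y ∈ q, B x y = 0) :
    (∀ x ∈ p, (∀ y ∈ p, B x y = 0) → x = 0) ∧ (B.restrict p).Nondegenerate := by
  have key : ∀ x ∈ p, (∀ y ∈ p, B x y = 0) → x = 0 := by
    intro x hx h
    apply hB.1 x
    intro y
    have hy : y ∈ p ⊔ q := by rw [hpq.sup_eq_top]; trivial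
    obtain ⟨a, ha, b, hb, rfl⟩ := Submodule.mem_sup.1 hy
    rw [map_add, h a ha, ho x hx b hb, add_zero]
  refine ⟨key, B.nondegenerate_restrict_of_disjoint_orthogonal hr ?_⟩
  rw [Submodule.disjoint_def]
  intro x hx hx2
  exact key x hx fun y hy => hr _ _ (hx2 y hy)

/-- For a skew-symmetric map `C`, the invertible Fitting component is the
`B`-orthogonal of the nilpotent one, and `B` restricts nondegenerately to both. -/
theorem stmt9 {V : Type*} [AddCommGroup V] [Module ℂ V] [FiniteDimensional ℂ V]
    (B : LinearMap.BilinForm ℂ V) (hB : B.Nondegenerate)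
    (hBsa : (∀ x y : V, B x y = B y x) ∨ (∀ x y : V, B x y = - B y x))
    (C : V →ₗ[ℂ] V)
    (hC : ∀ x y : V, B (C x) y = - B x (C y)) :
    (∀ v : V, v ∈ fittingInv C ↔ ∀ w ∈ fittingNil C, B v w = 0) ∧
    (B.restrict (fittingNil C)).Nondegenerate ∧
    (B.restrict (fittingInv C)).Nondegenerate := by
  have hr : B.IsRefl := by
    intro x y h
    rcases hBsa with h1 | h1
    · rw [h1, h]
    · rw [h1, h, neg_zero]
  have hc : IsCompl (fittingNil C) (fittingInv C) := C.isCompl_iSup_ker_pow_iInf_range_pow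
  have hpow : ∀ (k : ℕ) (x y : V), B ((C ^ k) x) y = (-1) ^ k * B x ((C ^ k) y) := by
    intro k
    induction k with
    | zero => intro x y; simp
    | succ k ih =>
      intro x y
      rw [pow_succ, Module.End.mul_apply, ih, hC, ← Module.End.mul_apply,
        ← pow_succ', ← pow_succ C]
      ring
  have ho : ∀ x ∈ fittingInv C, ∀ y ∈ fittingNil C, B x y = 0 := by
    intro x hx y hy
    obtain ⟨k, hk⟩ := C.eventually_iSup_ker_pow_eq.exists
    have hy' : y ∈ LinearMap.ker (C ^ k) := by
      rw [← hk]; exact hy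
    obtain ⟨z, rfl⟩ := (Submodule.mem_iInf _).1 hx k
    rw [hpow, LinearMap.mem_ker.1 hy', map_zero, mul_zero]
  obtain ⟨kN, nN⟩ := stmt9_aux B hB hr _ _ hc fun x hx y hy => hr _ _ (ho y hy x hx)
  obtain ⟨_, nI⟩ := stmt9_aux B hB hr _ _ hc.symm ho
  refine ⟨fun v => ⟨fun hv w hw => ho v hv w hw, fun h => ?_⟩, nN, nI⟩
  have hv : v ∈ fittingNil C ⊔ fittingInv C := by rw [hc.sup_eq_top]; trivial
  obtain ⟨a, ha, b, hb, rfl⟩ := Submodule.mem_sup.1 hv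
  have : a = 0 := kN a ha fun y hy => by
    have := h y hy
    rwa [map_add, LinearMap.add_apply, ho b hb y hy, add_zero] at this
  rw [this, zero_add]
  exact hb
end

section
/- Let (V, B) be a quadratic vector space over ℂ and let C, C' be nilpotent endomorphisms of V, both skew-symmetric with respect to B. Then there exist a nonzero scalar λ ∈ ℂ and an isometry P of (V, B) with C = λ • (P ∘ C' ∘ P⁻¹) if and only if there exists an isometry Q of (V, B) with C = Q ∘ C' ∘ Q⁻¹. -/
open NormedSpace in
theorem aux_intertwine {n : Type*} [Fintype n] [DecidableEq n] (A C D : Matrix n n ℂ)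
    (h : A * C = C * D) : exp A * C = C * exp D := by
  open scoped Matrix.Norms.Operator in
  have hp : ∀ k : ℕ, A ^ k * C = C * D ^ k := by
    intro k
    induction k with
    | zero => simp
    | succ k ih => rw [pow_succ, mul_assoc, h, ← mul_assoc, ih, mul_assoc, ← pow_succ]
  have h1 := (exp_series_hasSum_exp' (𝕂 := ℂ) A).mul_right C
  have h2 := (exp_series_hasSum_exp' (𝕂 := ℂ) D).mul_left C
  have he : (fun k : ℕ => ((k.factorial : ℂ)⁻¹ • A ^ k) * C)
      = fun k : ℕ => C * ((k.factorial : ℂ)⁻¹ • D ^ k) := by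
    funext k
    rw [smul_mul_assoc, mul_smul_comm, hp]
  exact (he ▸ h1).unique h2

theorem aux_grading {n : Type*} [Fintype n] [DecidableEq n] (C : Matrix n n ℂ)
    (hC : IsNilpotent C) : ∃ H : Matrix n n ℂ, H * C - C * H = C := by
  let W : Submodule ℂ (Matrix n n ℂ) :=
    LinearMap.range (LinearMap.mulRight ℂ C - LinearMap.mulLeft ℂ C)
  by_contra hcon
  have hnot : C ∉ W := by
    rintro ⟨H, hH⟩
    exact hcon ⟨H, by simpa using hH⟩
  obtain ⟨f, hfC, hfW⟩ := Submodule.exists_le_ker_of_notMem hnot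
  let Z : Matrix n n ℂ := Matrix.of fun i j => f (Matrix.single j i 1)
  have hf : ∀ M, f M = (Z * M).trace := by
    intro M
    conv_lhs => rw [Matrix.matrix_eq_sum_single M]
    simp only [map_sum, Matrix.trace, Matrix.diag, Matrix.mul_apply]
    rw [Finset.sum_comm]
    refine Finset.sum_congr rfl fun j _ => Finset.sum_congr rfl fun i _ => ?_
    have : Matrix.single i j (M i j) = (M i j) • Matrix.single i j (1 : ℂ) := by simp
    rw [this, map_smul, smul_eq_mul, mul_comm]
    rfl
  have hcomm : C * Z = Z * C := by
    rw [Matrix.ext_iff_trace_mul_right]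
    intro H
    have h0 : f (H * C - C * H) = 0 := hfW ⟨H, by simp⟩
    rw [hf, mul_sub, Matrix.trace_sub, ← mul_assoc, ← mul_assoc,
      Matrix.trace_mul_comm, ← mul_assoc] at h0
    exact sub_eq_zero.mp h0
  apply hfC
  rw [hf]
  have hcm : Commute Z C := hcomm.symm
  exact (Matrix.isNilpotent_trace_of_isNilpotent (hcm.isNilpotent_mul_left hC)).eq_zero

open NormedSpace Matrix in
theorem aux_matrix {n : Type*} [Fintype n] [DecidableEq n] (J C : Matrix n n ℂ)
    (hJ : IsUnit J.det) (hJs : Jᵀ = J) (hC : IsNilpotent C) (hs : Cᵀ * J = -(J * C))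
    (lam : ℂ) (hl : lam ≠ 0) :
    ∃ Q R : Matrix n n ℂ, Q * R = 1 ∧ R * Q = 1 ∧ Qᵀ * J * Q = J ∧ Q * C = lam • (C * Q) := by
  obtain ⟨H, hH⟩ := aux_grading C hC
  have hJ1 : J * J⁻¹ = 1 := Matrix.mul_nonsing_inv J hJ
  have hJ2 : J⁻¹ * J = 1 := Matrix.nonsing_inv_mul J hJ
  have hJi : J⁻¹ᵀ = J⁻¹ := by rw [Matrix.transpose_nonsing_inv, hJs]
  have hct : Cᵀ = -(J * C * J⁻¹) := by
    rw [← neg_mul, ← hs, mul_assoc, hJ1, mul_one]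
  let K : Matrix n n ℂ := J⁻¹ * Hᵀ * J
  have hK : K * C - C * K = -C := by
    have h1 : Cᵀ * Hᵀ - Hᵀ * Cᵀ = Cᵀ := by
      rw [← transpose_mul, ← transpose_mul, ← transpose_sub, hH]
    have h2 : J⁻¹ * (Cᵀ * Hᵀ - Hᵀ * Cᵀ) * J = J⁻¹ * Cᵀ * J := by rw [h1]
    have h3 : J⁻¹ * Cᵀ = - (C * J⁻¹) := by
      rw [hct, mul_neg, ← mul_assoc, ← mul_assoc, hJ2, one_mul]
    have h4 : J⁻¹ * (Cᵀ * Hᵀ - Hᵀ * Cᵀ) * J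
        = (J⁻¹ * Cᵀ) * Hᵀ * J - J⁻¹ * Hᵀ * (Cᵀ * J) := by noncomm_ring
    rw [h4, h3, hs] at h2
    have h5 : -(C * J⁻¹) * J = -C := by rw [neg_mul, mul_assoc, hJ2, mul_one]
    rw [h5] at h2
    rw [← h2]
    simp only [K]
    noncomm_ring
  let G : Matrix n n ℂ := (1 / 2 : ℂ) • (H - K)
  have hG : G * C - C * G = C := by
    have : G * C - C * G = (1 / 2 : ℂ) • ((H * C - C * H) - (K * C - C * K)) := by
      simp only [G, smul_mul_assoc, mul_smul_comm, ← smul_sub]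
      congr 1
      noncomm_ring
    rw [this, hH, hK, sub_neg_eq_add, ← two_smul ℂ C, smul_smul]
    norm_num
  have hGs : Gᵀ * J = J * (-G) := by
    have hKt : Kᵀ * J = J * H := by
      simp only [K, transpose_mul, transpose_transpose, hJs, hJi]
      rw [mul_assoc, mul_assoc, hJ2, mul_one]
    have hKJ : J * K = Hᵀ * J := by
      simp only [K]
      rw [← mul_assoc, ← mul_assoc, hJ1, one_mul]
    simp only [G, transpose_smul, transpose_sub, smul_mul_assoc, sub_mul, hKt, mul_neg,
      mul_smul_comm, mul_sub, hKJ, ← smul_neg]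
    congr 1
    abel
  clear_value G
  let t := Complex.log lam
  have hu : IsUnit (exp (t • G)).det := (Matrix.isUnit_iff_isUnit_det _).mp (Matrix.isUnit_exp _)
  refine ⟨exp (t • G), (exp (t • G))⁻¹, Matrix.mul_nonsing_inv _ hu, Matrix.nonsing_inv_mul _ hu,
    ?_, ?_⟩
  · rw [← Matrix.exp_transpose, aux_intertwine (t • G)ᵀ J (-(t • G)), Matrix.exp_neg, mul_assoc,
      Matrix.nonsing_inv_mul _ hu, mul_one]
    rw [transpose_smul, smul_mul_assoc, hGs, ← smul_neg, Matrix.mul_smul]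
  · have e1 : exp (t • (1 : Matrix n n ℂ)) = lam • (1 : Matrix n n ℂ) := by
      rw [Matrix.smul_one_eq_diagonal, Matrix.exp_diagonal, Matrix.smul_one_eq_diagonal]
      congr 1
      funext i
      rw [Pi.coe_exp, ← Complex.exp_eq_exp_ℂ]
      exact Complex.exp_log hl
    have e2 : exp (t • G + t • (1 : Matrix n n ℂ)) = lam • exp (t • G) := by
      rw [Matrix.exp_add_of_commute, e1, mul_smul_comm, mul_one]
      exact (Commute.one_right _).smul_right _
    rw [aux_intertwine (t • G) C (t • G + t • (1 : Matrix n n ℂ)), e2, mul_smul_comm]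
    rw [← smul_add, smul_mul_assoc, mul_smul_comm, mul_add, mul_one, ← sub_eq_iff_eq_add'.mp hG]

theorem aux_scale {V : Type*} [AddCommGroup V] [Module ℂ V] [FiniteDimensional ℂ V]
    (B : LinearMap.BilinForm ℂ V) (hB : B.Nondegenerate)
    (hBsymm : ∀ x y : V, B x y = B y x) (C : V →ₗ[ℂ] V) (hCnil : IsNilpotent C)
    (hC : ∀ x y : V, B (C x) y = - B x (C y)) (lam : ℂ) (hl : lam ≠ 0) :
    ∃ Q : V ≃ₗ[ℂ] V, (∀ x y : V, B (Q x) (Q y) = B x y) ∧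
      ∀ x, Q (C x) = lam • C (Q x) := by
  classical
  let b := Module.finBasis ℂ V
  let J := LinearMap.BilinForm.toMatrix b B
  let M := LinearMap.toMatrix b b C
  have hJ : IsUnit J.det :=
    isUnit_iff_ne_zero.mpr ((LinearMap.BilinForm.nondegenerate_iff_det_ne_zero b).mp hB)
  have hJs : J.transpose = J := by
    ext i j
    simp [J, LinearMap.BilinForm.toMatrix_apply, hBsymm (b j)]
  have hM : IsNilpotent M := by
    obtain ⟨k, hk⟩ := hCnil
    exact ⟨k, by simp only [M]; rw [LinearMap.toMatrix_pow, hk, map_zero]⟩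
  have hs : M.transpose * J = -(J * M) := by
    rw [← LinearMap.BilinForm.toMatrix_compLeft, ← LinearMap.BilinForm.toMatrix_compRight,
      ← map_neg]
    congr 1
    ext x y
    simp [hC]
  obtain ⟨Q, R, h1, h2, h3, h4⟩ := aux_matrix J M hJ hJs hM hs lam hl
  let q := Matrix.toLin b b Q
  let r := Matrix.toLin b b R
  have hqr : q ∘ₗ r = LinearMap.id := by
    simp only [q, r]; rw [← Matrix.toLin_mul, h1, Matrix.toLin_one]
  have hrq : r ∘ₗ q = LinearMap.id := by
    simp only [q, r]; rw [← Matrix.toLin_mul, h2, Matrix.toLin_one]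
  refine ⟨LinearEquiv.ofLinearMap q r hqr hrq, ?_, ?_⟩
  · have : B.comp q q = B := by
      apply (LinearMap.BilinForm.toMatrix b).injective
      rw [LinearMap.BilinForm.toMatrix_comp b b]
      simpa [q] using h3
    intro x y
    exact LinearMap.congr_fun (LinearMap.congr_fun this x) y
  · have : q ∘ₗ C = lam • (C ∘ₗ q) := by
      apply (LinearMap.toMatrix b b).injective
      rw [map_smul, LinearMap.toMatrix_comp b b b, LinearMap.toMatrix_comp b b b]
      simpa [q] using h4
    intro x
    exact LinearMap.congr_fun this x


/-- For nilpotent skew-symmetric endomorphisms `C, C'` of a quadratic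
vector space over `ℂ`, `C` is conjugate to a nonzero multiple of `C'` by an isometry
iff `C` is conjugate to `C'` by an isometry. -/
theorem stmt13 {V : Type*} [AddCommGroup V] [Module ℂ V] [FiniteDimensional ℂ V]
    (B : LinearMap.BilinForm ℂ V) (hB : B.Nondegenerate)
    (hBsymm : ∀ x y : V, B x y = B y x)
    (C C' : V →ₗ[ℂ] V)
    (hCnil : IsNilpotent C) (hC'nil : IsNilpotent C')
    (hC : ∀ x y : V, B (C x) y = - B x (C y))
    (hC' : ∀ x y : V, B (C' x) y = - B x (C' y)) :
    (∃ (lam : ℂ) (P : V ≃ₗ[ℂ] V), lam ≠ 0 ∧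
        (∀ x y : V, B (P x) (P y) = B x y) ∧
        (∀ x : V, C x = lam • P (C' (P.symm x)))) ↔
    (∃ Q : V ≃ₗ[ℂ] V, (∀ x y : V, B (Q x) (Q y) = B x y) ∧
        ∀ x : V, C x = Q (C' (Q.symm x))) := by
  constructor
  · rintro ⟨lam, P, hl, hP, h⟩
    obtain ⟨Q, hQ, hQC⟩ := aux_scale B hB hBsymm C' hC'nil hC' lam hl
    refine ⟨Q.trans P, fun x y => by simp [hP, hQ], fun x => ?_⟩
    rw [h x]
    simp [hQC]
  · rintro ⟨Q, hQ, h⟩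
    exact ⟨1, Q, one_ne_zero, hQ, fun x => by rw [one_smul, h x]⟩
end
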